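/- arXiv:2403.15563 — 2 statements merged into one kernel-verified Lean document; each statement's English description precedes it below -/
import Mathlib

section
/- Let D = ∏_{i=1}^d [a_i, b_i] ⊂ ℝ^d with a_i < b_i, let v ⊆ u ⊆ {1,…,d}, and let f : D → ℝ be |v| times continuously differentiable (so that ∂_v f := ∂^{|v|} f / ∏_{i∈v} ∂x_i exists and is continuous). Then the ANOVA term satisfies the L¹ bound ∫_{D_u} |f_{u,A}(x_u)| dx_u ≤ 2^{|u|−|v|} · (vol(D_u) · vol(D_v) / vol(D)) · ∫_D |∂_v f(x)| dx, where all integrals are with respect to Lebesgue measure, D_w = ∏_{i∈w} [a_i, b_i], and vol(D_w) = ∏_{i∈w} (b_i − a_i). -/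
open MeasureTheory

/-- The ANOVA decomposition term
`f_{u,A}(x) = Σ_{v ⊆ u} (−1)^{|u|−|v|} (1/vol(D_{vᶜ})) ∫_{D_{vᶜ}} f(x^{v,s}) ds`. -/
noncomputable def anovaTerm {d : ℕ} (a b : Fin d → ℝ) (f : (Fin d → ℝ) → ℝ)
    (u : Finset (Fin d)) (x : Fin d → ℝ) : ℝ :=
  ∑ v ∈ u.powerset, (-1 : ℝ) ^ (u.card - v.card) *
    ((∏ i ∈ vᶜ, (b i - a i))⁻¹ *
      ∫ s : {i : Fin d // i ∉ v} → ℝ in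
          Set.univ.pi (fun i : {i : Fin d // i ∉ v} => Set.Icc (a i.1) (b i.1)),
        f (fun i => if h : i ∈ v then x i else s ⟨i, h⟩))

/-- The mixed partial derivative `∂_v f = ∂^{|v|} f / ∏_{i∈v} ∂x_i`. -/
noncomputable def mixedPartial {d : ℕ} (v : Finset (Fin d)) (f : (Fin d → ℝ) → ℝ) :
    (Fin d → ℝ) → ℝ :=
  v.toList.foldr (fun i g => fun x => fderiv ℝ g x (Pi.single i 1)) f


noncomputable def muA {ι : Type*} [Fintype ι] (a b : ι → ℝ) : Measure (ι → ℝ) :=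
  Measure.pi fun i => (ENNReal.ofReal (b i - a i))⁻¹ • (volume.restrict (Set.Icc (a i) (b i)))

section
variable {ι : Type*} [Fintype ι] {a b : ι → ℝ}

theorem nuA_prob {a b : ℝ} (h : a < b) :
    IsProbabilityMeasure ((ENNReal.ofReal (b - a))⁻¹ • (volume.restrict (Set.Icc a b))) := by
  constructor
  simp only [Measure.smul_apply, Measure.restrict_apply_univ, Real.volume_Icc, smul_eq_mul]
  apply ENNReal.inv_mul_cancel
  · simpa using h
  · simp

theorem muA_prob (hab : ∀ i, a i < b i) : IsProbabilityMeasure (muA a b) := by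
  have := fun i => nuA_prob (hab i)
  unfold muA
  infer_instance

theorem muA_eq (hab : ∀ i, a i < b i) :
    muA a b = (∏ i, ENNReal.ofReal (b i - a i))⁻¹ •
      (volume.restrict (Set.univ.pi fun i => Set.Icc (a i) (b i))) := by
  have := fun i => nuA_prob (hab i)
  unfold muA
  refine Measure.pi_eq ?_
  intro s hs
  rw [volume_pi, Measure.restrict_pi_pi]
  simp only [Measure.smul_apply, smul_eq_mul, Measure.pi_pi, Finset.prod_mul_distrib]
  congr 1
  rw [ENNReal.prod_inv_distrib]
  intro i _ j _ _
  simp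

theorem muA_int (hab : ∀ i, a i < b i) (f : (ι → ℝ) → ℝ) :
    ∫ x, f x ∂(muA a b) = (∏ i, (b i - a i))⁻¹ *
      ∫ x in Set.univ.pi fun i => Set.Icc (a i) (b i), f x := by
  rw [muA_eq hab, integral_smul_measure]
  simp only [ENNReal.toReal_inv, ENNReal.toReal_prod, smul_eq_mul]
  congr 2
  refine Finset.prod_congr rfl fun i _ => ?_
  rw [ENNReal.toReal_ofReal (sub_nonneg.2 (hab i).le)]

theorem muA_ae (hab : ∀ i, a i < b i) :
    ∀ᵐ x ∂(muA a b), x ∈ Set.univ.pi fun i => Set.Icc (a i) (b i) := by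
  rw [muA_eq hab]
  refine Measure.ae_smul_measure ?_ _
  exact ae_restrict_mem (MeasurableSet.univ_pi fun i => measurableSet_Icc)

theorem muA_restrict (hab : ∀ i, a i < b i) :
    (muA a b).restrict (Set.univ.pi fun i => Set.Icc (a i) (b i)) = muA a b :=
  Measure.restrict_eq_self_of_ae_mem (muA_ae hab)

theorem boxA_compact : IsCompact (Set.univ.pi fun i => Set.Icc (a i) (b i)) :=
  isCompact_univ_pi fun i => isCompact_Icc

theorem muA_integrable (hab : ∀ i, a i < b i) {f : (ι → ℝ) → ℝ} (hf : Continuous f) :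
    Integrable f (muA a b) := by
  have := muA_prob hab
  rw [← muA_restrict hab]
  exact hf.continuousOn.integrableOn_compact boxA_compact

theorem muA_integrable_prod (hab : ∀ i, a i < b i) {f : (ι → ℝ) × (ι → ℝ) → ℝ}
    (hf : Continuous f) : Integrable f ((muA a b).prod (muA a b)) := by
  have := muA_prob hab
  rw [← muA_restrict hab, Measure.prod_restrict]
  exact hf.continuousOn.integrableOn_compact (boxA_compact.prod boxA_compact)

theorem muA_cont (hab : ∀ i, a i < b i) {f : (ι → ℝ) → (ι → ℝ) → ℝ}
    (hf : Continuous (Function.uncurry f)) : Continuous fun x => ∫ s, f x s ∂(muA a b) := by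
  have := muA_prob hab
  rw [← muA_restrict hab]
  exact continuous_parametric_integral_of_continuous hf boxA_compact

theorem muA_map_sub (hab : ∀ i, a i < b i) (p : ι → Prop) [DecidablePred p]
    [inst : Fintype {i // p i}] :
    MeasurePreserving (fun (x : ι → ℝ) (j : {i // p i}) => x j.1) (muA a b)
      (muA (fun j : {i // p i} => a j.1) (fun j => b j.1)) := by
  have := fun i => nuA_prob (hab i)
  have h := measurePreserving_piEquivPiSubtypeProd
    (fun i => (ENNReal.ofReal (b i - a i))⁻¹ • (volume.restrict (Set.Icc (a i) (b i)))) p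
  have hi : inst = Subtype.fintype p := Subsingleton.elim _ _
  subst hi
  exact measurePreserving_fst.comp h

theorem cont_piecewise [DecidableEq ι] (w : Finset ι) {X : Type*} [TopologicalSpace X]
    {g h : X → ι → ℝ} (hg : Continuous g) (hh : Continuous h) :
    Continuous fun x => w.piecewise (g x) (h x) := by
  refine continuous_pi fun i => ?_
  by_cases hi : i ∈ w
  · simpa [hi, Function.comp_def] using (continuous_apply i).comp hg
  · simpa [hi, Function.comp_def] using (continuous_apply i).comp hh

theorem muA_piecewise [DecidableEq ι] (hab : ∀ i, a i < b i) (w : Finset ι) :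
    MeasurePreserving (fun p : (ι → ℝ) × (ι → ℝ) => w.piecewise p.1 p.2)
      ((muA a b).prod (muA a b)) (muA a b) := by
  have := fun i => nuA_prob (hab i)
  have hm : Measurable (fun p : (ι → ℝ) × (ι → ℝ) => w.piecewise p.1 p.2) :=
    (cont_piecewise w continuous_fst continuous_snd).measurable
  refine ⟨hm, ?_⟩
  symm
  unfold muA
  refine Measure.pi_eq ?_
  intro s hs
  rw [Measure.map_apply hm (MeasurableSet.univ_pi hs)]
  have : (fun p : (ι → ℝ) × (ι → ℝ) => w.piecewise p.1 p.2) ⁻¹' (Set.univ.pi s) =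
      (Set.univ.pi fun i => if i ∈ w then s i else Set.univ) ×ˢ
      (Set.univ.pi fun i => if i ∈ w then Set.univ else s i) := by
    ext p
    simp only [Set.mem_preimage, Set.mem_pi, Set.mem_univ, true_imp_iff, Set.mem_prod,
      ← forall_and]
    refine forall_congr' fun i => ?_
    by_cases hi : i ∈ w <;> simp [hi]
  rw [this, Measure.prod_prod, Measure.pi_pi, Measure.pi_pi, ← Finset.prod_mul_distrib]
  refine Finset.prod_congr rfl fun i _ => ?_
  by_cases hi : i ∈ w <;> simp only [hi, if_true, if_false, measure_univ, mul_one, one_mul]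

theorem muA_int_piecewise [DecidableEq ι] (hab : ∀ i, a i < b i) (w : Finset ι)
    {h : (ι → ℝ) → ℝ} (hh : Continuous h) :
    ∫ x, ∫ s, h (w.piecewise x s) ∂(muA a b) ∂(muA a b) = ∫ x, h x ∂(muA a b) := by
  have := muA_prob hab
  have hc := hh.comp (cont_piecewise w (continuous_fst (X := ι → ℝ) (Y := ι → ℝ)) continuous_snd)
  have h1 := integral_prod _ (muA_integrable_prod hab hc)
  have h2 := (muA_piecewise hab w).map_eq
  conv_rhs => rw [← h2]
  rw [integral_map (muA_piecewise hab w).measurable.aemeasurable hh.aestronglyMeasurable]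
  exact h1.symm

/-- one-dimensional bound -/
theorem oneD [DecidableEq ι] (hab : ∀ i, a i < b i) (i : ι) {g : (ι → ℝ) → ℝ}
    (hg : ContDiff ℝ 1 g) (y : ι → ℝ) {p q : ℝ} (hp : p ∈ Set.Icc (a i) (b i))
    (hq : q ∈ Set.Icc (a i) (b i)) :
    |g (Function.update y i p) - g (Function.update y i q)| ≤
      (b i - a i) * ∫ t, |fderiv ℝ g (Function.update y i (t i)) (Pi.single i 1)| ∂(muA a b) := by
  have := fun i => nuA_prob (hab i)
  have hc : Continuous fun t : ℝ => fderiv ℝ g (Function.update y i t) (Pi.single i 1) := by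
    have := hg.continuous_fderiv (by simp)
    fun_prop
  have hd : ∀ t : ℝ, HasDerivAt (fun t => g (Function.update y i t))
      (fderiv ℝ g (Function.update y i t) (Pi.single i 1)) t := by
    intro t
    have h1 : HasFDerivAt g _ (Function.update y i t) :=
      ((hg.differentiable (by simp)) (Function.update y i t)).hasFDerivAt
    exact h1.comp_hasDerivAt t (hasDerivAt_update y i t)
  have hme : MeasurePreserving (Function.eval i) (muA a b)
      ((ENNReal.ofReal (b i - a i))⁻¹ • (volume.restrict (Set.Icc (a i) (b i)))) :=
    measurePreserving_eval _ i
  have h2 : ∫ t, |fderiv ℝ g (Function.update y i (t i)) (Pi.single i 1)| ∂(muA a b) =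
      (b i - a i)⁻¹ * ∫ t in Set.Icc (a i) (b i),
        |fderiv ℝ g (Function.update y i t) (Pi.single i 1)| := by
    have := integral_map (μ := muA a b) hme.measurable.aemeasurable
      (f := fun t => |fderiv ℝ g (Function.update y i t) (Pi.single i 1)|)
      hc.abs.aestronglyMeasurable
    rw [hme.map_eq, integral_smul_measure] at this
    rw [ENNReal.toReal_inv, ENNReal.toReal_ofReal (sub_nonneg.2 (hab i).le), smul_eq_mul] at this
    exact this.symm
  rw [h2, mul_inv_cancel_left₀ (sub_pos.2 (hab i)).ne']
  rw [← intervalIntegral.integral_eq_sub_of_hasDerivAt (a := q) (b := p) (fun t _ => hd t)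
    (hc.intervalIntegrable _ _)]
  refine (intervalIntegral.norm_integral_le_integral_norm_uIoc (f := fun t =>
    fderiv ℝ g (Function.update y i t) (Pi.single i 1))).trans ?_
  refine setIntegral_mono_set (hc.abs.continuousOn.integrableOn_compact isCompact_Icc)
    (Filter.Eventually.of_forall fun t => abs_nonneg _) ?_
  refine HasSubset.Subset.eventuallyLE ?_
  exact Set.uIoc_subset_uIcc.trans (Set.uIcc_subset_Icc hq hp)

end

section
variable {ι : Type*} [Fintype ι] [DecidableEq ι] {a b : ι → ℝ}

noncomputable def mpl (l : List ι) (f : (ι → ℝ) → ℝ) : (ι → ℝ) → ℝ :=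
  l.foldr (fun i g => fun x => fderiv ℝ g x (Pi.single i 1)) f

theorem mpl_cons (i : ι) (l : List ι) (f : (ι → ℝ) → ℝ) :
    mpl (i :: l) f = fun x => fderiv ℝ (mpl l f) x (Pi.single i 1) := rfl

theorem mpl_contDiff (l : List ι) {f : (ι → ℝ) → ℝ} : ∀ (k : ℕ),
    ContDiff ℝ ((k + l.length : ℕ) : WithTop ℕ∞) f → ContDiff ℝ (k : WithTop ℕ∞) (mpl l f) := by
  induction l with
  | nil => intro k h; simpa [mpl] using h
  | cons i l ih =>
    intro k h
    have h1 : ContDiff ℝ ((k + 1 : ℕ) : WithTop ℕ∞) (mpl l f) := by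
      apply ih
      convert h using 2
      simp; omega
    rw [mpl_cons]
    have h2 : ContDiff ℝ (k : WithTop ℕ∞) (fderiv ℝ (mpl l f)) :=
      h1.fderiv_right (by push_cast; exact le_rfl)
    exact h2.clm_apply contDiff_const

theorem mpl_contDiff_one {i : ι} {l : List ι} {f : (ι → ℝ) → ℝ}
    (h : ContDiff ℝ (((i :: l).length : ℕ) : WithTop ℕ∞) f) : ContDiff ℝ 1 (mpl l f) := by
  have := mpl_contDiff l (f := f) 1 (by convert h using 2; simp; omega)
  simpa using this

theorem mpl_continuous {l : List ι} {f : (ι → ℝ) → ℝ}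
    (h : ContDiff ℝ ((l.length : ℕ) : WithTop ℕ∞) f) : Continuous (mpl l f) := by
  have := mpl_contDiff l (f := f) 0 (by simpa using h)
  exact this.continuous

theorem len_le {i : ι} {l : List ι} {f : (ι → ℝ) → ℝ}
    (h : ContDiff ℝ (((i :: l).length : ℕ) : WithTop ℕ∞) f) :
    ContDiff ℝ ((l.length : ℕ) : WithTop ℕ∞) f :=
  h.of_le (by exact_mod_cast (by simp))

theorem mpl_sub (l : List ι) {f g : (ι → ℝ) → ℝ}
    (hf : ContDiff ℝ ((l.length : ℕ) : WithTop ℕ∞) f)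
    (hg : ContDiff ℝ ((l.length : ℕ) : WithTop ℕ∞) g) :
    mpl l (fun x => f x - g x) = fun x => mpl l f x - mpl l g x := by
  induction l with
  | nil => rfl
  | cons i l ih =>
    rw [mpl_cons, ih (len_le hf) (len_le hg)]
    funext x
    have h1 := (mpl_contDiff_one hf).differentiable (by simp) x
    have h2 := (mpl_contDiff_one hg).differentiable (by simp) x
    rw [fderiv_fun_sub h1 h2]
    rfl

theorem contDiff_upd {n : WithTop ℕ∞} (i : ι) (c : ℝ) :
    ContDiff ℝ n (fun y : ι → ℝ => Function.update y i c) := by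
  rw [contDiff_pi]
  intro j
  by_cases h : j = i
  · subst h; simpa using contDiff_const
  · simpa [h] using contDiff_apply ℝ ℝ j

theorem mpl_upd (l : List ι) (i : ι) (hi : i ∉ l) (c : ℝ) {f : (ι → ℝ) → ℝ}
    (hf : ContDiff ℝ ((l.length : ℕ) : WithTop ℕ∞) f) :
    mpl l (fun y => f (Function.update y i c)) = fun y => mpl l f (Function.update y i c) := by
  induction l with
  | nil => rfl
  | cons j l ih =>
    have hji : j ≠ i := by rintro rfl; simp at hi
    rw [mpl_cons, ih (fun h => hi (by simp [h])) (len_le hf)]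
    have h1 := (mpl_contDiff_one hf)
    funext y
    have h2 : ContDiff ℝ 1 (fun y => mpl l f (Function.update y i c)) :=
      h1.comp (contDiff_upd i c)
    rw [← (h2.differentiable (by simp) y).lineDeriv_eq_fderiv]
    rw [mpl_cons]
    simp only
    rw [← (h1.differentiable (by simp) (Function.update y i c)).lineDeriv_eq_fderiv]
    unfold lineDeriv
    congr 1
    funext t
    refine congrArg (mpl l f) ?_
    funext k
    by_cases hk : k = i
    · subst hk; simp [hji.symm]
    · simp [hk]

theorem main_ind (hab : ∀ i, a i < b i) {x s : ι → ℝ}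
    (hx : x ∈ Set.univ.pi fun i => Set.Icc (a i) (b i))
    (hs : s ∈ Set.univ.pi fun i => Set.Icc (a i) (b i)) (z : ι → ℝ)
    (l : List ι) : l.Nodup → ∀ (f : (ι → ℝ) → ℝ),
    ContDiff ℝ ((l.length : ℕ) : WithTop ℕ∞) f →
    |∑ w ∈ l.toFinset.powerset, (-1 : ℝ) ^ w.card *
        f (w.piecewise x (l.toFinset.piecewise s z))| ≤
      (∏ i ∈ l.toFinset, (b i - a i)) *
        ∫ t, |mpl l f (l.toFinset.piecewise t z)| ∂(muA a b) := by
  have := muA_prob hab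
  induction l with
  | nil =>
    intro _ f hf
    have e : ∀ s : ι → ℝ, ([] : List ι).toFinset.piecewise s z = z := by
      intro s
      funext k
      simp [Finset.piecewise]
    simp only [e]
    simp [mpl]
  | cons i l ih =>
    intro hl f hf
    obtain ⟨hil, hl⟩ := List.nodup_cons.1 hl
    have hiS : i ∉ l.toFinset := by simpa using hil
    rw [List.toFinset_cons, Finset.sum_powerset_insert hiS, Finset.prod_insert hiS]
    set S := l.toFinset with hS
    have hg := mpl_contDiff_one hf
    have hfl := len_le hf
    set F : (ι → ℝ) → ℝ := fun y =>
      f (Function.update y i (s i)) - f (Function.update y i (x i)) with hF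
    have hc1 := hfl.comp (contDiff_upd (n := ((l.length : ℕ) : WithTop ℕ∞)) i (s i))
    have hc2 := hfl.comp (contDiff_upd (n := ((l.length : ℕ) : WithTop ℕ∞)) i (x i))
    have hFc : ContDiff ℝ ((l.length : ℕ) : WithTop ℕ∞) F := hc1.sub hc2
    have hmF : mpl l F = fun y => mpl l f (Function.update y i (s i)) -
        mpl l f (Function.update y i (x i)) := by
      have e0 := mpl_sub l hc1 hc2
      have e1 := mpl_upd l i hil (s i) hfl
      have e2 := mpl_upd l i hil (x i) hfl
      refine e0.trans ?_
      funext y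
      exact congrArg₂ (· - ·) (congrFun e1 y) (congrFun e2 y)
    have hsum : (∑ w ∈ S.powerset, (-1 : ℝ) ^ w.card *
          f (w.piecewise x ((insert i S).piecewise s z)) +
        ∑ w ∈ S.powerset, (-1 : ℝ) ^ (insert i w).card *
          f ((insert i w).piecewise x ((insert i S).piecewise s z))) =
        ∑ w ∈ S.powerset, (-1 : ℝ) ^ w.card * F (w.piecewise x (S.piecewise s z)) := by
      rw [← Finset.sum_add_distrib]
      refine Finset.sum_congr rfl fun w hw => ?_
      have hiw : i ∉ w := fun h => hiS (Finset.mem_powerset.1 hw h)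
      rw [Finset.card_insert_of_notMem hiw, hF]
      have e1 : w.piecewise x ((insert i S).piecewise s z) =
          Function.update (w.piecewise x (S.piecewise s z)) i (s i) := by
        funext k
        by_cases hk : k = i
        · subst hk; simp [hiw]
        · by_cases hkw : k ∈ w <;> by_cases hkS : k ∈ S <;> simp [hk, hkw, hkS]
      have e2 : (insert i w).piecewise x ((insert i S).piecewise s z) =
          Function.update (w.piecewise x (S.piecewise s z)) i (x i) := by
        funext k
        by_cases hk : k = i
        · subst hk; simp
        · by_cases hkw : k ∈ w <;> by_cases hkS : k ∈ S <;> simp [hk, hkw, hkS]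
      simp only [e1, e2]
      ring
    rw [hsum]
    refine (ih hl F hFc).trans ?_
    rw [mul_comm (b i - a i), mul_assoc]
    refine mul_le_mul_of_nonneg_left ?_
      (Finset.prod_nonneg fun j _ => (sub_pos.2 (hab j)).le)
    have hdc : Continuous (mpl (i :: l) f) := mpl_continuous hf
    have hh : Continuous fun y => |mpl (i :: l) f ((insert i S).piecewise y z)| :=
      (hdc.comp (cont_piecewise _ continuous_id continuous_const)).abs
    rw [← muA_int_piecewise hab S hh, ← integral_const_mul]
    refine integral_mono ?_ ?_ ?_
    · exact muA_integrable hab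
        ((mpl_continuous hFc).comp (cont_piecewise _ continuous_id continuous_const)).abs
    · refine muA_integrable hab (continuous_const.mul (muA_cont hab ?_))
      exact hh.comp (cont_piecewise S continuous_fst continuous_snd)
    · intro t
      simp only [hmF]
      refine (oneD hab i hg _ (hs i trivial) (hx i trivial)).trans (le_of_eq ?_)
      congr 1
      refine integral_congr_ae (Filter.Eventually.of_forall fun t' => ?_)
      simp only [mpl_cons]
      congr 4
      funext k
      by_cases hk : k = i
      · subst hk; simp [hiS]
      · by_cases hkS : k ∈ S <;> simp [hk, hkS]

end

theorem sum_split {α : Type*} [DecidableEq α] {u v : Finset α} (hvu : v ⊆ u)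
    (h : Finset α → ℝ) : ∑ w ∈ u.powerset, h w =
      ∑ w₂ ∈ (u \ v).powerset, ∑ w ∈ v.powerset, h (w ∪ w₂) := by
  rw [← Finset.sum_product']
  symm
  refine Finset.sum_bij' (fun p _ => p.2 ∪ p.1) (fun w _ => (w \ v, w ∩ v)) ?_ ?_ ?_ ?_ ?_
  · intro p hp
    simp only [Finset.mem_product, Finset.mem_powerset] at *
    exact Finset.union_subset (hp.2.trans hvu) (hp.1.trans Finset.sdiff_subset)
  · intro w hw
    simp only [Finset.mem_product, Finset.mem_powerset] at *
    exact ⟨Finset.sdiff_subset_sdiff hw le_rfl, Finset.inter_subset_right⟩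
  · intro p hp
    simp only [Finset.mem_product, Finset.mem_powerset] at hp
    have h1 := hp.1
    have h2 := hp.2
    ext k
    · have := @h1 k; have := @h2 k; simp at *; tauto
    · have := @h1 k; have := @h2 k; simp at *; tauto
  · intro w hw
    ext k
    simp; tauto
  · intro p hp
    rfl

theorem anova_eq {d : ℕ} {a b : Fin d → ℝ} (hab : ∀ i, a i < b i) (u : Finset (Fin d))
    {f : (Fin d → ℝ) → ℝ} (hf : Continuous f) (x : Fin d → ℝ) :
    anovaTerm a b f u x = ∫ s, ∑ w ∈ u.powerset, (-1 : ℝ) ^ (u.card - w.card) *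
      f (w.piecewise x s) ∂(muA a b) := by
  have hc : ∀ w : Finset (Fin d), Continuous fun s => f (w.piecewise x s) := fun w =>
    hf.comp (cont_piecewise w continuous_const continuous_id)
  rw [integral_finsetSum _ fun w _ => (muA_integrable hab (hc w)).const_mul _]
  unfold anovaTerm
  refine Finset.sum_congr rfl fun w _ => ?_
  rw [integral_const_mul]
  congr 1
  have hp := muA_map_sub hab (fun i => i ∉ w)
  have h1 := muA_int (a := fun j : {i // i ∉ w} => a j.1) (b := fun j => b j.1)
    (fun j => hab j.1) (fun s => f (fun i => if h : i ∈ w then x i else s ⟨i, h⟩))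
  have h2 : ∏ i ∈ wᶜ, (b i - a i) = ∏ j : {i // i ∉ w}, (b j.1 - a j.1) :=
    (Finset.prod_subtype _ (by simp) _)
  rw [h2, ← h1, ← hp.map_eq, integral_map hp.measurable.aemeasurable]
  · refine integral_congr_ae (Filter.Eventually.of_forall fun s => ?_)
    simp only
    congr 1
  · refine Continuous.aestronglyMeasurable (hf.comp (continuous_pi fun i => ?_))
    by_cases h : i ∈ w
    · simpa [h] using continuous_const
    · simpa [h] using continuous_apply _

theorem pt_bound {d : ℕ} {a b : Fin d → ℝ} (hab : ∀ i, a i < b i) {u v : Finset (Fin d)}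
    (hvu : v ⊆ u) {f : (Fin d → ℝ) → ℝ} (hf : ContDiff ℝ v.card f) {x s : Fin d → ℝ}
    (hx : x ∈ Set.univ.pi fun i => Set.Icc (a i) (b i))
    (hs : s ∈ Set.univ.pi fun i => Set.Icc (a i) (b i)) :
    |∑ w ∈ u.powerset, (-1 : ℝ) ^ (u.card - w.card) * f (w.piecewise x s)| ≤
      ∑ w₂ ∈ (u \ v).powerset, (∏ i ∈ v, (b i - a i)) *
        ∫ t, |mixedPartial v f (v.piecewise t (w₂.piecewise x s))| ∂(muA a b) := by
  rw [sum_split hvu]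
  refine (Finset.abs_sum_le_sum_abs _ _).trans (Finset.sum_le_sum fun w₂ hw₂ => ?_)
  have hw₂ := Finset.mem_powerset.1 hw₂
  have key := main_ind hab hx hs (w₂.piecewise x s) v.toList v.nodup_toList f (by simpa using hf)
  rw [Finset.toList_toFinset] at key
  refine le_trans (le_of_eq ?_) key
  have : ∀ w ∈ v.powerset, (-1 : ℝ) ^ (u.card - (w ∪ w₂).card) * f ((w ∪ w₂).piecewise x s) =
      (-1 : ℝ) ^ (u.card + w₂.card) *
      ((-1 : ℝ) ^ w.card * f (w.piecewise x (v.piecewise s (w₂.piecewise x s)))) := by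
    intro w hw
    have hw := Finset.mem_powerset.1 hw
    have hd : Disjoint w w₂ :=
      Disjoint.mono hw hw₂ Finset.disjoint_sdiff
    have hle : (w ∪ w₂).card ≤ u.card := Finset.card_le_card
      (Finset.union_subset (hw.trans hvu) (hw₂.trans Finset.sdiff_subset))
    rw [← mul_assoc, ← pow_add]
    congr 1
    · rw [Finset.card_union_of_disjoint hd] at *
      obtain ⟨m, hm⟩ := Nat.exists_eq_add_of_le hle
      rw [hm, show w.card + w₂.card + m - (w.card + w₂.card) = m by omega,
        show w.card + w₂.card + m + w₂.card + w.card = m + 2 * (w.card + w₂.card) by ring,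
        pow_add, pow_mul]
      simp
    · congr 1
      funext k
      have h2 := @hw₂ k
      by_cases hk : k ∈ w
      · simp [hk]
      · by_cases hkv : k ∈ v <;> by_cases hk2 : k ∈ w₂ <;> simp_all [Finset.piecewise]
  rw [Finset.sum_congr rfl this, ← Finset.mul_sum, abs_mul]
  simp

/-- for `v ⊆ u` and `f` which is `|v|` times continuously
differentiable, the ANOVA term satisfies the `L¹` bound
`∫_{D_u} |f_{u,A}(x_u)| dx_u ≤ 2^{|u|−|v|} (vol(D_u) vol(D_v) / vol(D)) ∫_D |∂_v f|`.
Since `f_{u,A}` depends only on the coordinates in `u`, it is regarded as a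
function on `D_u` by filling the remaining coordinates with `a i`. -/
theorem statement_6 {d : ℕ} (a b : Fin d → ℝ) (hab : ∀ i, a i < b i)
    (u v : Finset (Fin d)) (hvu : v ⊆ u)
    (f : (Fin d → ℝ) → ℝ) (hf : ContDiff ℝ v.card f) :
    (∫ y : {i : Fin d // i ∈ u} → ℝ in
        Set.univ.pi (fun i : {i : Fin d // i ∈ u} => Set.Icc (a i.1) (b i.1)),
      |anovaTerm a b f u (fun i => if h : i ∈ u then y ⟨i, h⟩ else a i)|) ≤
      2 ^ (u.card - v.card) *
        ((∏ i ∈ u, (b i - a i)) * (∏ i ∈ v, (b i - a i)) / ∏ i, (b i - a i)) *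
        ∫ x in Set.univ.pi fun i => Set.Icc (a i) (b i), |mixedPartial v f x| := by
  have hprob := muA_prob hab
  have hfc : Continuous f := hf.continuous
  have hmc : Continuous (mixedPartial v f) :=
    mpl_continuous (l := v.toList) (by simpa using hf)
  set G : (Fin d → ℝ) → (Fin d → ℝ) → ℝ := fun x s =>
    ∑ w ∈ u.powerset, (-1 : ℝ) ^ (u.card - w.card) * f (w.piecewise x s) with hG
  have hGc : Continuous (Function.uncurry G) := by
    refine continuous_finsetSum _ fun w _ => continuous_const.mul ?_
    exact hfc.comp (cont_piecewise w continuous_fst continuous_snd)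
  have hA : ∀ x, anovaTerm a b f u x = ∫ s, G x s ∂(muA a b) := fun x => anova_eq hab u hfc x
  have hAc : Continuous fun x => anovaTerm a b f u x := by
    simp only [hA]
    exact muA_cont hab hGc
  set H : (Fin d → ℝ) → ℝ := fun z => ∫ t, |mixedPartial v f (v.piecewise t z)| ∂(muA a b) with hH
  have hHc : Continuous H := by
    refine muA_cont hab ?_
    exact (hmc.comp (cont_piecewise v continuous_snd continuous_fst)).abs
  have hHint : ∫ z, H z ∂(muA a b) = ∫ x, |mixedPartial v f x| ∂(muA a b) := by
    rw [← muA_int_piecewise hab vᶜ hmc.abs]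
    simp only [hH, Finset.piecewise_compl]
  -- left-hand side
  have hvolu : (0 : ℝ) < ∏ i ∈ u, (b i - a i) := Finset.prod_pos fun i _ => sub_pos.2 (hab i)
  have hvol : (0 : ℝ) < ∏ i, (b i - a i) := Finset.prod_pos fun i _ => sub_pos.2 (hab i)
  have hL : (∫ y : {i : Fin d // i ∈ u} → ℝ in
        Set.univ.pi (fun i : {i : Fin d // i ∈ u} => Set.Icc (a i.1) (b i.1)),
      |anovaTerm a b f u (fun i => if h : i ∈ u then y ⟨i, h⟩ else a i)|) =
      (∏ i ∈ u, (b i - a i)) * ∫ x, |anovaTerm a b f u x| ∂(muA a b) := by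
    have hp := muA_map_sub hab (fun i => i ∈ u)
    have h1 := muA_int (a := fun j : {i // i ∈ u} => a j.1) (b := fun j => b j.1)
      (fun j => hab j.1)
      (fun y => |anovaTerm a b f u (fun i => if h : i ∈ u then y ⟨i, h⟩ else a i)|)
    have h2 : ∏ i ∈ u, (b i - a i) = ∏ j : {i // i ∈ u}, (b j.1 - a j.1) :=
      (Finset.prod_subtype _ (by simp) _)
    rw [← h2, ← hp.map_eq, integral_map hp.measurable.aemeasurable] at h1
    · rw [eq_inv_mul_iff_mul_eq₀ hvolu.ne'] at h1
      rw [← h1]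
      congr 1
      refine integral_congr_ae (Filter.Eventually.of_forall fun x => ?_)
      simp only [hA]
      congr 2
      funext s
      refine Finset.sum_congr rfl fun w hw => ?_
      congr 2
      funext k
      have hwu := Finset.mem_powerset.1 hw
      by_cases hk : k ∈ w
      · simp [hk, hwu hk]
      · simp [hk]
    · refine Continuous.aestronglyMeasurable (hAc.comp (continuous_pi fun i => ?_)).abs
      by_cases h : i ∈ u
      · simpa [h] using continuous_apply _
      · simpa [h] using continuous_const
  have hR := muA_int hab (fun x => |mixedPartial v f x|)
  rw [eq_inv_mul_iff_mul_eq₀ hvol.ne'] at hR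
  rw [hL, ← hR]
  have hBc : ∀ w₂ : Finset (Fin d), Continuous (Function.uncurry fun x s : Fin d → ℝ =>
      (∏ i ∈ v, (b i - a i)) * H (w₂.piecewise x s)) := fun w₂ =>
    continuous_const.mul (hHc.comp (cont_piecewise w₂ continuous_fst continuous_snd))
  have hBs : Continuous (Function.uncurry fun x s : Fin d → ℝ => ∑ w₂ ∈ (u \ v).powerset,
      (∏ i ∈ v, (b i - a i)) * H (w₂.piecewise x s)) :=
    continuous_finsetSum _ fun w₂ _ => hBc w₂
  have hmain : ∫ x, |anovaTerm a b f u x| ∂(muA a b) ≤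
      2 ^ (u.card - v.card) * (∏ i ∈ v, (b i - a i)) *
        ∫ x, |mixedPartial v f x| ∂(muA a b) := by
    calc ∫ x, |anovaTerm a b f u x| ∂(muA a b)
        ≤ ∫ x, ∫ s, ∑ w₂ ∈ (u \ v).powerset,
            (∏ i ∈ v, (b i - a i)) * H (w₂.piecewise x s) ∂(muA a b) ∂(muA a b) := by
          refine integral_mono_ae (muA_integrable hab hAc.abs)
            (muA_integrable hab (muA_cont hab hBs)) ?_
          filter_upwards [muA_ae hab] with x hx
          rw [hA]
          refine abs_integral_le_integral_abs.trans ?_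
          refine integral_mono_ae (muA_integrable hab (hGc.uncurry_left x).abs)
            (muA_integrable hab (hBs.uncurry_left x)) ?_
          filter_upwards [muA_ae hab] with s hs
          exact pt_bound hab hvu hf hx hs
      _ = ∑ w₂ ∈ (u \ v).powerset, (∏ i ∈ v, (b i - a i)) *
            ∫ x, |mixedPartial v f x| ∂(muA a b) := by
          have e1 : ∀ x, ∫ s, ∑ w₂ ∈ (u \ v).powerset,
              (∏ i ∈ v, (b i - a i)) * H (w₂.piecewise x s) ∂(muA a b) =
              ∑ w₂ ∈ (u \ v).powerset, ∫ s, (∏ i ∈ v, (b i - a i)) *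
                H (w₂.piecewise x s) ∂(muA a b) := fun x =>
            integral_finsetSum _ fun w₂ _ => muA_integrable hab ((hBc w₂).uncurry_left x)
          simp only [e1]
          rw [integral_finsetSum _ fun w₂ _ => muA_integrable hab (muA_cont hab (hBc w₂))]
          refine Finset.sum_congr rfl fun w₂ _ => ?_
          simp only [integral_const_mul]
          rw [muA_int_piecewise hab w₂ hHc, hHint]
      _ = _ := by
          rw [Finset.sum_const, Finset.card_powerset, Finset.card_sdiff_of_subset hvu]
          simp [mul_assoc]
  refine (mul_le_mul_of_nonneg_left hmain hvolu.le).trans (le_of_eq ?_)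
  field_simp
end

section
/- Let d ≥ 2 and h ∈ (0,1). For every V ∈ SO(d) there exist angles α^r_j for r = 1, …, d−1 and j = 1, …, r, each an integer multiple of h, with α^r_1 ∈ [0, 2π) and α^r_j ∈ [0, π) for j ≥ 2, such that ‖V − U(α)‖_F ≤ d(d−1)h, where U(α) := ∏_{r=1}^{d−1} ∏_{j=1}^{r} R(d − 1 − r + j, α^r_j). -/
open Matrix

/-- The Jacobi (Givens) rotation matrix acting in the coordinate plane
`(k, k+1)` (0-indexed; the paper's 1-indexed `R(k+1, θ)`). -/
noncomputable def givens (d : ℕ) (k : ℕ) (θ : ℝ) : Matrix (Fin d) (Fin d) ℝ :=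
  Matrix.of fun i j =>
    if (i : ℕ) = k ∧ (j : ℕ) = k then Real.cos θ
    else if (i : ℕ) = k ∧ (j : ℕ) = k + 1 then -Real.sin θ
    else if (i : ℕ) = k + 1 ∧ (j : ℕ) = k then Real.sin θ
    else if (i : ℕ) = k + 1 ∧ (j : ℕ) = k + 1 then Real.cos θ
    else if i = j then 1 else 0

lemma givens_mul_apply (d k : ℕ) (hk : k + 1 < d) (a : ℝ) (B : Matrix (Fin d) (Fin d) ℝ)
    (i j : Fin d) : (givens d k a * B) i j =
      if (i : ℕ) = k then Real.cos a * B ⟨k, by omega⟩ j - Real.sin a * B ⟨k+1, hk⟩ j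
      else if (i : ℕ) = k + 1 then Real.sin a * B ⟨k, by omega⟩ j + Real.cos a * B ⟨k+1, hk⟩ j
      else B i j := by
  rw [Matrix.mul_apply]
  have hkk : (⟨k, by omega⟩ : Fin d) ≠ ⟨k+1, hk⟩ := by simp [Fin.ext_iff]
  split_ifs with h1 h2
  · have : ∀ l, givens d k a i l * B l j = (if l = ⟨k, by omega⟩ then Real.cos a * B l j else 0)
        + (if l = ⟨k+1, hk⟩ then - Real.sin a * B l j else 0) := by
      intro l
      by_cases e1 : (l : ℕ) = k <;> by_cases e2 : (l : ℕ) = k + 1 <;>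
        simp [givens, h1, e1, e2, Fin.ext_iff] <;> omega
    simp only [this, Finset.sum_add_distrib, Finset.sum_ite_eq', Finset.mem_univ, if_true]
    ring
  · have : ∀ l, givens d k a i l * B l j = (if l = ⟨k, by omega⟩ then Real.sin a * B l j else 0)
        + (if l = ⟨k+1, hk⟩ then Real.cos a * B l j else 0) := by
      intro l
      by_cases e1 : (l : ℕ) = k <;> by_cases e2 : (l : ℕ) = k + 1 <;>
        simp [givens, h2, e1, e2, Fin.ext_iff] <;> omega
    simp only [this, Finset.sum_add_distrib, Finset.sum_ite_eq', Finset.mem_univ, if_true]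
  · have : ∀ l, givens d k a i l * B l j = (if i = l then B l j else 0) := by
      intro l
      simp [givens, h1, h2]
    simp [this]

lemma givens_mul (d k : ℕ) (hk : k + 1 < d) (a b : ℝ) :
    givens d k a * givens d k b = givens d k (a + b) := by
  ext i j
  rw [givens_mul_apply d k hk]
  by_cases h1 : (i : ℕ) = k
  · by_cases e1 : (j : ℕ) = k <;> by_cases e2 : (j : ℕ) = k + 1 <;>
      simp [givens, h1, e1, e2, Fin.ext_iff, Real.cos_add, Real.sin_add] <;> first | omega | ring_nf | skip
    split_ifs <;> first | omega | simp
  by_cases h2 : (i : ℕ) = k + 1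
  · by_cases e1 : (j : ℕ) = k <;> by_cases e2 : (j : ℕ) = k + 1 <;>
      simp [givens, h2, e1, e2, Fin.ext_iff, Real.cos_add, Real.sin_add] <;> first | omega | ring_nf | skip
    split_ifs <;> first | omega | simp
  · simp [givens, h1, h2]

lemma givens_zero (d k : ℕ) : givens d k 0 = 1 := by
  ext i j
  simp only [givens, Matrix.of_apply, Matrix.one_apply, Fin.ext_iff, Real.cos_zero, Real.sin_zero,
    neg_zero]
  split_ifs <;> first | rfl | omega

lemma givens_transpose (d k : ℕ) (a : ℝ) : (givens d k a)ᵀ = givens d k (-a) := by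
  ext i j
  simp only [givens, Matrix.of_apply, Matrix.transpose_apply, Fin.ext_iff, Real.cos_neg,
    Real.sin_neg, neg_neg]
  split_ifs <;> first | rfl | omega

lemma givens_orth (d k : ℕ) (hk : k + 1 < d) (a : ℝ) : (givens d k a)ᵀ * givens d k a = 1 := by
  rw [givens_transpose, givens_mul d k hk, neg_add_cancel, givens_zero]

lemma givens_det (d k : ℕ) (hk : k + 1 < d) (a : ℝ) : (givens d k a).det = 1 := by
  have h1 : (givens d k a).det = (givens d k (a/2)).det * (givens d k (a/2)).det := by
    rw [← Matrix.det_mul, givens_mul d k hk, add_halves]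
  have h2 := congrArg Matrix.det (givens_orth d k hk (a/2))
  rw [Matrix.det_mul, Matrix.det_transpose, Matrix.det_one] at h2
  rw [h1, h2]

open scoped Matrix.Norms.Frobenius in
lemma frob_eq {d : ℕ} (X : Matrix (Fin d) (Fin d) ℝ) : Real.sqrt (Matrix.trace (Xᵀ * X)) = ‖X‖ := by
  rw [Matrix.frobenius_norm_def, ← Real.sqrt_eq_rpow]
  congr 1
  simp only [Matrix.trace, Matrix.diag, Matrix.mul_apply, Matrix.transpose_apply]
  rw [Finset.sum_comm]
  simp [sq]

noncomputable def frob {d : ℕ} (X : Matrix (Fin d) (Fin d) ℝ) : ℝ :=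
  Real.sqrt (Matrix.trace (Xᵀ * X))

lemma frob_add {d : ℕ} (X Y : Matrix (Fin d) (Fin d) ℝ) : frob (X + Y) ≤ frob X + frob Y := by
  simp only [frob, frob_eq]
  open scoped Matrix.Norms.Frobenius in exact norm_add_le X Y

lemma frob_mul_left {d : ℕ} (A X : Matrix (Fin d) (Fin d) ℝ) (hA : Aᵀ * A = 1) :
    frob (A * X) = frob X := by
  unfold frob
  rw [Matrix.transpose_mul, Matrix.mul_assoc, ← Matrix.mul_assoc Aᵀ, hA, Matrix.one_mul]

lemma frob_mul_right {d : ℕ} (A X : Matrix (Fin d) (Fin d) ℝ) (hA : Aᵀ * A = 1) :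
    frob (X * A) = frob X := by
  have hA' := mul_eq_one_comm.mp hA
  unfold frob
  rw [Matrix.transpose_mul, Matrix.mul_assoc, Matrix.trace_mul_comm, Matrix.mul_assoc,
    Matrix.mul_assoc, hA', Matrix.mul_one]

def Close {d : ℕ} (A B : Matrix (Fin d) (Fin d) ℝ) (e : ℝ) : Prop :=
  Aᵀ * A = 1 ∧ Bᵀ * B = 1 ∧ frob (A - B) ≤ e

lemma orth_mul {d : ℕ} {A B : Matrix (Fin d) (Fin d) ℝ} (hA : Aᵀ * A = 1) (hB : Bᵀ * B = 1) :
    (A * B)ᵀ * (A * B) = 1 := by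
  rw [Matrix.transpose_mul, Matrix.mul_assoc, ← Matrix.mul_assoc Aᵀ, hA, Matrix.one_mul, hB]

lemma Close.mul {d : ℕ} {A B C D : Matrix (Fin d) (Fin d) ℝ} {e f : ℝ} (h1 : Close A B e)
    (h2 : Close C D f) : Close (A * C) (B * D) (e + f) := by
  refine ⟨orth_mul h1.1 h2.1, orth_mul h1.2.1 h2.2.1, ?_⟩
  have : A * C - B * D = (A - B) * D + A * (C - D) := by noncomm_ring
  rw [this]
  refine (frob_add _ _).trans ?_
  rw [frob_mul_right _ _ h2.2.1, frob_mul_left _ _ h1.1]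
  exact add_le_add h1.2.2 h2.2.2

lemma Close.list {d : ℕ} (F G : ℕ → Matrix (Fin d) (Fin d) ℝ) (e : ℕ → ℝ) (n : ℕ)
    (H : ∀ i < n, Close (F i) (G i) (e i)) :
    Close ((List.range n).map F).prod ((List.range n).map G).prod (∑ i ∈ Finset.range n, e i) := by
  induction n with
  | zero => simp [Close, frob]
  | succ n ih =>
    simp only [List.range_succ, List.map_append, List.prod_append, Finset.sum_range_succ,
      List.map_cons, List.map_nil, List.prod_cons, List.prod_nil, mul_one]
    exact (ih fun i hi => H i (by omega)).mul (H n (by omega))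

lemma givens_close (d k : ℕ) (hk : k + 1 < d) (a b h : ℝ) (hab : |a - b| ≤ h) :
    Close (givens d k a) (givens d k b) (2 * h) := by
  refine ⟨givens_orth d k hk a, givens_orth d k hk b, ?_⟩
  have h0 : 0 ≤ h := (abs_nonneg _).trans hab
  unfold frob
  apply Real.sqrt_le_iff.mpr
  refine ⟨by positivity, ?_⟩
  have key : (givens d k a - givens d k b)ᵀ * (givens d k a - givens d k b)
      = (1 - givens d k (b - a)) + (1 - givens d k (a - b)) := by
    rw [Matrix.transpose_sub, Matrix.sub_mul, Matrix.mul_sub, Matrix.mul_sub,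
      givens_orth d k hk, givens_orth d k hk, givens_transpose, givens_transpose,
      givens_mul d k hk, givens_mul d k hk, neg_add_eq_sub, neg_add_eq_sub]
    abel
  have tr : ∀ t, Matrix.trace (1 - givens d k t) = 2 * (1 - Real.cos t) := by
    intro t
    have hkk : (⟨k, by omega⟩ : Fin d) ≠ ⟨k+1, hk⟩ := by simp [Fin.ext_iff]
    have : ∀ l, (1 - givens d k t) l l = (if l = ⟨k, by omega⟩ then 1 - Real.cos t else 0)
        + (if l = ⟨k+1, hk⟩ then 1 - Real.cos t else 0) := by
      intro l
      by_cases e1 : (l : ℕ) = k <;> by_cases e2 : (l : ℕ) = k + 1 <;>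
        simp [givens, e1, e2, Fin.ext_iff] <;> omega
    simp only [Matrix.trace, Matrix.diag, this, Finset.sum_add_distrib, Finset.sum_ite_eq',
      Finset.mem_univ, if_true]
    ring
  rw [key, Matrix.trace_add, tr, tr, ← neg_sub a b, Real.cos_neg]
  have h3 := Real.one_sub_sq_div_two_le_cos (x := a - b)
  have h4 : (a - b)^2 ≤ h^2 := sq_le_sq' (by linarith [(abs_le.mp hab).1]) (abs_le.mp hab).2
  nlinarith

lemma round_grid (T h b : ℝ) (hh : 0 < h) (hT : 0 < T) (hb0 : 0 ≤ b) (hb1 : b ≤ T) :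
    ∃ x : ℝ, (∃ m : ℕ, x = m * h) ∧ x ∈ Set.Ico 0 T ∧ |b - x| ≤ h := by
  have h1 : (⌊b / h⌋₊ : ℝ) * h ≤ b := (le_div_iff₀ hh).mp (Nat.floor_le (by positivity))
  have h2 : b < ((⌊b / h⌋₊ : ℝ) + 1) * h := (div_lt_iff₀ hh).mp (Nat.lt_floor_add_one _)
  generalize ⌊b / h⌋₊ = m at h1 h2
  by_cases hm : (m : ℝ) * h < T
  · exact ⟨m * h, ⟨m, rfl⟩, ⟨by positivity, hm⟩, abs_le.mpr ⟨by linarith, by linarith⟩⟩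
  · push Not at hm
    cases m with
    | zero => simp at hm; linarith
    | succ m =>
      push_cast at h1 h2 hm
      exact ⟨m * h, ⟨m, rfl⟩, ⟨by positivity, by linarith⟩, abs_le.mpr ⟨by linarith, by linarith⟩⟩

noncomputable def gp (d k n : ℕ) (t : ℕ → ℝ) : Matrix (Fin d) (Fin d) ℝ :=
  ((List.range n).map fun j => givens d (k + j) (t j)).prod

lemma gp_succ (d k n : ℕ) (t : ℕ → ℝ) :
    gp d k (n+1) t = givens d k (t 0) * gp d (k+1) n (fun j => t (j+1)) := by
  simp only [gp, List.range_succ_eq_map, List.map_cons, List.prod_cons, List.map_map, add_zero]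
  congr 3
  funext j
  simp only [Function.comp, Nat.succ_eq_add_one]
  rw [show k + (j + 1) = k + 1 + j by omega]

lemma gp_orth (d k n : ℕ) (hn : k + n < d) (t : ℕ → ℝ) : (gp d k n t)ᵀ * gp d k n t = 1 := by
  induction n generalizing k t with
  | zero => simp [gp]
  | succ n ih =>
    rw [gp_succ]
    exact orth_mul (givens_orth _ _ (by omega) _) (ih _ (by omega) _)

lemma gp_det (d k n : ℕ) (hn : k + n < d) (t : ℕ → ℝ) : (gp d k n t).det = 1 := by
  induction n generalizing k t with
  | zero => simp [gp]
  | succ n ih =>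
    rw [gp_succ, Matrix.det_mul, givens_det _ _ (by omega), ih _ (by omega), one_mul]

lemma gp_row (d k n : ℕ) (hn : k + n < d) (t : ℕ → ℝ) (i j : Fin d) (hi : (i : ℕ) < k) :
    gp d k n t i j = (1 : Matrix (Fin d) (Fin d) ℝ) i j := by
  induction n generalizing k t with
  | zero => simp [gp]
  | succ n ih =>
    rw [gp_succ, givens_mul_apply _ _ (by omega), if_neg (by omega), if_neg (by omega)]
    exact ih _ (by omega) _ (by omega)

lemma gp_succ_row (d k n : ℕ) (hn : k + (n + 1) < d) (t : ℕ → ℝ) (j : Fin d) :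
    gp d k (n+1) t ⟨k, by omega⟩ j = Real.cos (t 0) * (if (j : ℕ) = k then 1 else 0)
      - Real.sin (t 0) * gp d (k+1) n (fun j => t (j+1)) ⟨k+1, by omega⟩ j := by
  rw [gp_succ, givens_mul_apply _ _ (by omega), if_pos rfl, gp_row _ _ _ (by omega) _ _ _ (by simp)]
  simp [Matrix.one_apply, Fin.ext_iff, eq_comm]

/-- one reduction step: `s` is the intended value of the sine -/
lemma unit_split {d : ℕ} (k : ℕ) (hk : k + 1 < d) (v : Fin d → ℝ) (hv : ∑ i, v i ^ 2 = 1)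
    (h0 : ∀ i : Fin d, (i : ℕ) < k → v i = 0) (s : ℝ) (hs : s ≠ 0)
    (hs2 : s ^ 2 = 1 - v ⟨k, by omega⟩ ^ 2) :
    ∃ w : Fin d → ℝ, ∑ i, w i ^ 2 = 1 ∧ (∀ i : Fin d, (i : ℕ) < k + 1 → w i = 0) ∧
      (∀ i : Fin d, v i = v ⟨k, by omega⟩ * (if (i : ℕ) = k then 1 else 0) - s * w i) ∧
      (∀ i : Fin d, k < (i : ℕ) → w i = - v i / s) := by
  refine ⟨fun i => if (i : ℕ) = k then 0 else - v i / s, ?_, ?_, ?_, ?_⟩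
  · have : ∀ i : Fin d, (if (i : ℕ) = k then 0 else - v i / s) ^ 2 =
        (v i ^ 2 - if i = ⟨k, by omega⟩ then v i ^ 2 else 0) / s ^ 2 := by
      intro i
      by_cases e : (i : ℕ) = k
      · simp [e, Fin.ext_iff]
      · simp [e, Fin.ext_iff, div_pow]
    simp only [this]
    rw [← Finset.sum_div, Finset.sum_sub_distrib, hv, Finset.sum_ite_eq']
    simp only [Finset.mem_univ, if_true]
    rw [← hs2]
    exact div_self (pow_ne_zero _ hs)
  · intro i hi
    by_cases e : (i : ℕ) = k
    · simp [e]
    · simp [e, h0 i (by omega)]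
  · intro i
    by_cases e : (i : ℕ) = k
    · have : i = ⟨k, by omega⟩ := Fin.ext e
      simp [this]
    · simp only [e, if_false]
      field_simp
      ring
  · intro i hi
    simp [show (i : ℕ) ≠ k by omega]

lemma sq_le_one {d : ℕ} (v : Fin d → ℝ) (hv : ∑ i, v i ^ 2 = 1) (i : Fin d) : v i ^ 2 ≤ 1 := by
  rw [← hv]
  exact Finset.single_le_sum (f := fun i => v i ^ 2) (fun i _ => sq_nonneg _) (Finset.mem_univ i)

lemma others_zero {d : ℕ} (v : Fin d → ℝ) (hv : ∑ i, v i ^ 2 = 1) (i : Fin d) (hi : v i ^ 2 = 1)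
    (j : Fin d) (hj : j ≠ i) : v j = 0 := by
  rw [← Finset.add_sum_erase _ _ (Finset.mem_univ i), hi] at hv
  have h1 := Finset.single_le_sum (f := fun i => v i ^ 2) (s := Finset.univ.erase i)
    (fun i _ => sq_nonneg _) (Finset.mem_erase.mpr ⟨hj, Finset.mem_univ j⟩)
  have : v j ^ 2 ≤ 0 := by linarith
  exact pow_eq_zero_iff (two_ne_zero) |>.mp (le_antisymm this (sq_nonneg _))

lemma hemi (d n k : ℕ) (hn : k + n + 1 = d) (v : Fin d → ℝ) (hv : ∑ i, v i ^ 2 = 1)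
    (h0 : ∀ i : Fin d, (i : ℕ) < k → v i = 0) (hs : 0 ≤ (-1 : ℝ) ^ n * v ⟨d - 1, by omega⟩) :
    ∃ t : ℕ → ℝ, (∀ j, t j ∈ Set.Icc 0 Real.pi) ∧ ∀ j, gp d k n t ⟨k, by omega⟩ j = v j := by
  induction n generalizing k v with
  | zero =>
    refine ⟨fun _ => 0, fun _ => ⟨le_rfl, Real.pi_pos.le⟩, ?_⟩
    have hk : (⟨d - 1, by omega⟩ : Fin d) = ⟨k, by omega⟩ := by simp; omega
    rw [hk] at hs
    have hz : ∀ j : Fin d, j ≠ ⟨k, by omega⟩ → v j = 0 := by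
      intro j hj
      apply h0
      have := j.2
      have : (j : ℕ) ≠ k := fun h => hj (Fin.ext h)
      omega
    have h1 : v ⟨k, by omega⟩ ^ 2 = 1 := by
      rw [← hv, Finset.sum_eq_single_of_mem _ (Finset.mem_univ (⟨k, by omega⟩ : Fin d))]
      intro j _ hj
      simp [hz j hj]
    have h2 : v ⟨k, by omega⟩ = 1 := by
      simp at hs
      nlinarith
    intro j
    by_cases hj : j = ⟨k, by omega⟩
    · simp [gp, hj, h2]
    · simp [gp, hz j hj, Matrix.one_apply, Ne.symm hj]
  | succ n ih =>
    set c := v ⟨k, by omega⟩ with hc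
    have hc2 : c ^ 2 ≤ 1 := sq_le_one v hv _
    have hc3 := abs_le_one_iff_mul_self_le_one.mpr (by linarith [sq c] : c * c ≤ 1)
    rw [abs_le] at hc3
    have hcos := Real.cos_arccos hc3.1 hc3.2
    have hsin := Real.sin_arccos c
    by_cases hz : c ^ 2 = 1
    · refine ⟨fun j => if j = 0 then Real.arccos c else 0, ?_, ?_⟩
      · intro j
        by_cases hj : j = 0
        · simp [hj, Real.arccos_nonneg, Real.arccos_le_pi]
        · simp [hj, Real.pi_pos.le]
      · intro j
        rw [gp_succ_row _ _ _ (by omega)]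
        simp only [if_true, hcos, hsin, hz, sub_self, Real.sqrt_zero, zero_mul, sub_zero]
        by_cases hj : (j : ℕ) = k
        · have : j = ⟨k, by omega⟩ := Fin.ext hj
          simp [this, hc]
        · simp only [hj, if_false, mul_zero]
          exact (others_zero v hv _ hz j (fun h => hj (by rw [h]))).symm
    · have hpos : 0 < 1 - c ^ 2 := by
        rcases lt_or_eq_of_le hc2 with h | h
        · linarith
        · exact absurd h hz
      have hsp := Real.sqrt_pos.mpr hpos
      obtain ⟨w, w1, w2, w3, w4⟩ := unit_split k (by omega) v hv h0 _ hsp.ne'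
        (Real.sq_sqrt hpos.le)
      obtain ⟨t, t1, t2⟩ := ih (k+1) (by omega) w w1 w2 (by
        rw [w4 _ (by simp; omega)]
        have := div_nonneg hs hsp.le
        refine this.trans_eq ?_
        rw [pow_succ]; ring)
      refine ⟨fun j => if j = 0 then Real.arccos c else t (j - 1), ?_, ?_⟩
      · intro j
        cases j with
        | zero => simpa using ⟨Real.arccos_nonneg c, Real.arccos_le_pi c⟩
        | succ j => simpa using t1 j
      · intro j
        rw [gp_succ_row _ _ _ (by omega), w3 j]
        simp [hcos, hsin, t2 j, ← hc]

lemma sphere (d n k : ℕ) (hn : k + (n + 1) + 1 = d) (v : Fin d → ℝ) (hv : ∑ i, v i ^ 2 = 1)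
    (h0 : ∀ i : Fin d, (i : ℕ) < k → v i = 0) :
    ∃ t : ℕ → ℝ, t 0 ∈ Set.Icc 0 (2 * Real.pi) ∧ (∀ j, 1 ≤ j → t j ∈ Set.Icc 0 Real.pi) ∧
      ∀ j, gp d k (n+1) t ⟨k, by omega⟩ j = v j := by
  by_cases hs : 0 ≤ (-1 : ℝ) ^ (n+1) * v ⟨d - 1, by omega⟩
  · obtain ⟨t, t1, t2⟩ := hemi d (n+1) k hn v hv h0 hs
    refine ⟨t, ⟨(t1 0).1, ?_⟩, fun j _ => t1 j, t2⟩
    linarith [(t1 0).2, Real.pi_pos]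
  · push Not at hs
    set c := v ⟨k, by omega⟩ with hc
    have hc2 : c ^ 2 ≤ 1 := sq_le_one v hv _
    have hc3 := abs_le_one_iff_mul_self_le_one.mpr (by linarith [sq c] : c * c ≤ 1)
    rw [abs_le] at hc3
    have hcos := Real.cos_arccos hc3.1 hc3.2
    have hsin := Real.sin_arccos c
    have hz : c ^ 2 ≠ 1 := by
      intro hz
      rw [others_zero v hv _ hz ⟨d - 1, by omega⟩ (by simp; omega)] at hs
      simp at hs
    have hpos : 0 < 1 - c ^ 2 := by
      rcases lt_or_eq_of_le hc2 with h | h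
      · linarith
      · exact absurd h hz
    have hsp := Real.sqrt_pos.mpr hpos
    obtain ⟨w, w1, w2, w3, w4⟩ := unit_split k (by omega) v hv h0 (-√(1 - c^2))
      (neg_ne_zero.mpr hsp.ne') (by rw [neg_sq]; exact Real.sq_sqrt hpos.le)
    obtain ⟨t, t1, t2⟩ := hemi d n (k+1) (by omega) w w1 w2 (by
      rw [w4 _ (by simp; omega)]
      have := div_nonneg (neg_nonneg.mpr hs.le) hsp.le
      refine this.trans_eq ?_
      rw [pow_succ, neg_div_neg_eq]; ring)
    refine ⟨fun j => if j = 0 then 2 * Real.pi - Real.arccos c else t (j - 1), ?_, ?_, ?_⟩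
    · have h1 := Real.arccos_nonneg c
      have h2 := Real.arccos_le_pi c
      exact ⟨by simp only [if_true]; linarith [Real.pi_pos], by simp only [if_true]; linarith⟩
    · intro j hj
      cases j with
      | zero => omega
      | succ j => simpa using t1 j
    · intro j
      rw [gp_succ_row _ _ _ (by omega), w3 j]
      simp [Real.cos_two_pi_sub, Real.sin_two_pi_sub, hcos, hsin, t2 j, ← hc]

lemma orth_cols_zero {d : ℕ} (V : Matrix (Fin d) (Fin d) ℝ) (hV : V * Vᵀ = 1) (i l : Fin d)
    (hi : ∀ j, V i j = (1 : Matrix (Fin d) (Fin d) ℝ) i j) (hl : l ≠ i) : V l i = 0 := by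
  have := congrFun (congrFun hV l) i
  rw [Matrix.mul_apply] at this
  simpa [hi, Matrix.one_apply, hl] using this

lemma hurwitz (d n : ℕ) (hn : n < d) (V : Matrix (Fin d) (Fin d) ℝ) (hV : Vᵀ * V = 1)
    (hdet : V.det = 1)
    (hr : ∀ i : Fin d, (i : ℕ) + 1 + n < d → ∀ j, V i j = (1 : Matrix (Fin d) (Fin d) ℝ) i j) :
    ∃ b : ℕ → ℕ → ℝ, (∀ r < n, b r 0 ∈ Set.Icc 0 (2 * Real.pi) ∧
        ∀ j, 1 ≤ j → b r j ∈ Set.Icc 0 Real.pi) ∧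
      V = ((List.range n).map fun r => gp d (d - 2 - r) (r + 1) (b r)).prod := by
  induction n generalizing V with
  | zero =>
    refine ⟨fun _ _ => 0, by simp, ?_⟩
    simp only [List.range_zero, List.map_nil, List.prod_nil]
    have hV' := mul_eq_one_comm.mp hV
    have hdiag : V = Matrix.diagonal fun i => V i i := by
      ext i j
      by_cases hij : i = j
      · simp [hij]
      · rw [Matrix.diagonal_apply_ne _ hij]
        by_cases hi : (i : ℕ) + 1 + 0 < d
        · rw [hr i hi, Matrix.one_apply_ne hij]
        · have : (j : ℕ) ≠ i := fun h => hij (Fin.ext h.symm)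
          exact orth_cols_zero V hV' j i (hr j (by omega)) hij
    have hlast : V ⟨d-1, by omega⟩ ⟨d-1, by omega⟩ = 1 := by
      rw [hdiag, Matrix.det_diagonal] at hdet
      rw [Finset.prod_eq_single_of_mem _ (Finset.mem_univ (⟨d-1, by omega⟩ : Fin d))] at hdet
      · exact hdet
      · intro i _ hi
        have : (i : ℕ) ≠ d - 1 := fun h => hi (Fin.ext h)
        rw [hr i (by omega), Matrix.one_apply_eq]
    rw [hdiag, ← Matrix.diagonal_one]
    congr 1
    funext i
    by_cases hi : (i : ℕ) + 1 + 0 < d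
    · rw [hr i hi, Matrix.one_apply_eq]
    · have : i = ⟨d-1, by omega⟩ := Fin.ext (by simp; omega)
      rw [this, hlast]
  | succ n ih =>
    have hV' := mul_eq_one_comm.mp hV
    set k := d - 2 - n with hk
    obtain ⟨t, t1, t2, t3⟩ := sphere d n k (by omega) (V ⟨k, by omega⟩)
      (by
        have := congrFun (congrFun hV' ⟨k, by omega⟩) ⟨k, by omega⟩
        rw [Matrix.mul_apply, Matrix.one_apply_eq] at this
        simpa [sq] using this)
      (fun i hi => orth_cols_zero V hV' i _ (hr i (by omega)) (by
        intro h; rw [← h] at hi; simp at hi))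
    set E := gp d k (n+1) t with hE
    have hEo : Eᵀ * E = 1 := gp_orth _ _ _ (by omega) _
    have hEo' := mul_eq_one_comm.mp hEo
    have hEd : E.det = 1 := gp_det _ _ _ (by omega) _
    obtain ⟨b, b1, b2⟩ := ih (by omega) (V * Eᵀ)
      (orth_mul hV (by rw [Matrix.transpose_transpose]; exact hEo'))
      (by rw [Matrix.det_mul, Matrix.det_transpose, hdet, hEd, one_mul])
      (by
        intro i hi j
        have : ∀ l, V i l = E i l := by
          intro l
          by_cases e : (i : ℕ) = k
          · have : i = ⟨k, by omega⟩ := Fin.ext e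
            rw [this, t3]
          · rw [hr i (by omega), hE, gp_row _ _ _ (by omega) _ _ _ (by omega)]
        rw [← hEo']
        simp only [Matrix.mul_apply, this])
    refine ⟨fun r => if r = n then t else b r, ?_, ?_⟩
    · intro r hrn
      by_cases e : r = n
      · simp only [e, if_true]; exact ⟨t1, t2⟩
      · simp only [e, if_false]; exact b1 r (by omega)
    · have hVE : V = (V * Eᵀ) * E := by rw [Matrix.mul_assoc, hEo, Matrix.mul_one]
      rw [hVE, b2, List.range_succ, List.map_append, List.prod_append]
      simp only [List.map_cons, List.map_nil, List.prod_cons, List.prod_nil, mul_one, if_true]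
      congr 2
      apply List.map_congr_left
      intro r hr'
      have := List.mem_range.mp hr'
      simp [show r ≠ n by omega]

/-- grid search bound: for `d ≥ 2`, `h ∈ (0,1)` and `V ∈ SO(d)`
there are grid angles `α^r_j` (integer multiples of `h`, with `α^r_1 ∈ [0,2π)`
and `α^r_j ∈ [0,π)` for `j ≥ 2`) such that `‖V − U(α)‖_F ≤ d(d−1)h`, where
`U(α) = ∏_{r=1}^{d−1} ∏_{j=1}^{r} R(d−1−r+j, α^r_j)`.  Indices are re-indexed
from `0` (`r = r'+1`, `j = j'+1`), the Frobenius norm is `√(tr(XᵀX))`, and the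
products are ordered lists. -/
theorem statement_16 (d : ℕ) (hd : 2 ≤ d) (h : ℝ) (hh0 : 0 < h) (hh1 : h < 1)
    (V : Matrix (Fin d) (Fin d) ℝ) (hV : Vᵀ * V = 1) (hdet : V.det = 1) :
    ∃ α : ℕ → ℕ → ℝ,
      (∀ r' < d - 1, ∀ j' ≤ r', ∃ m : ℕ, α r' j' = m * h) ∧
      (∀ r' < d - 1, α r' 0 ∈ Set.Ico 0 (2 * Real.pi) ∧
        ∀ j', 1 ≤ j' → j' ≤ r' → α r' j' ∈ Set.Ico 0 Real.pi) ∧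
      Real.sqrt (Matrix.trace
          ((V - ((List.range (d - 1)).map fun r' =>
              (((List.range (r' + 1)).map fun j' =>
                givens d (d - 2 - r' + j') (α r' j')).prod)).prod)ᵀ *
            (V - ((List.range (d - 1)).map fun r' =>
              (((List.range (r' + 1)).map fun j' =>
                givens d (d - 2 - r' + j') (α r' j')).prod)).prod))) ≤
        d * (d - 1) * h := by
  obtain ⟨b, b1, b2⟩ := hurwitz d (d-1) (by omega) V hV hdet (by intro i hi; omega)
  have H : ∀ r j : ℕ, ∃ x : ℝ, r < d - 1 → ((∃ m : ℕ, x = m * h) ∧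
      x ∈ Set.Ico 0 (if j = 0 then 2 * Real.pi else Real.pi) ∧ |b r j - x| ≤ h) := by
    intro r j
    by_cases hr : r < d - 1
    · by_cases hj : j = 0
      · subst hj
        obtain ⟨x, hx⟩ := round_grid (2 * Real.pi) h (b r 0) hh0 (by positivity)
          (b1 r hr).1.1 (b1 r hr).1.2
        exact ⟨x, fun _ => by simpa using hx⟩
      · have hb := (b1 r hr).2 j (by omega)
        obtain ⟨x, hx⟩ := round_grid Real.pi h (b r j) hh0 Real.pi_pos hb.1 hb.2
        exact ⟨x, fun _ => by simpa [hj] using hx⟩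
    · exact ⟨0, fun h => absurd h hr⟩
  choose α hα using H
  refine ⟨α, fun r hr j _ => (hα r j hr).1, fun r hr => ⟨by simpa using (hα r 0 hr).2.1, ?_⟩, ?_⟩
  · intro j hj _
    simpa [show j ≠ 0 by omega] using (hα r j hr).2.1
  · have hc := Close.list (d := d) (fun r => gp d (d - 2 - r) (r + 1) (b r))
      (fun r => gp d (d - 2 - r) (r + 1) (α r)) (fun r => ∑ _i ∈ Finset.range (r+1), 2 * h) (d - 1)
      (fun r hr => Close.list _ _ _ _ fun j hj =>
        givens_close d _ (by omega) _ _ h (hα r j hr).2.2)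
    rw [← b2] at hc
    refine hc.2.2.trans (le_of_eq ?_)
    have hsum : ∀ n : ℕ, ∑ r ∈ Finset.range n, ∑ _i ∈ Finset.range (r+1), 2 * h
        = (n + 1) * n * h := by
      intro n
      induction n with
      | zero => simp
      | succ n ih =>
        rw [Finset.sum_range_succ, ih]
        simp only [Finset.sum_const, Finset.card_range, nsmul_eq_mul]
        push_cast
        ring
    rw [hsum, Nat.cast_sub (by omega)]
    push_cast
    ring
end
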